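/- Let M, N ⊆ ℝ^{n+q} be open sets and Φ : M → N a diffeomorphism. Let F : M → ℝ^{n+q}, G : M → ℝ^{(n+q)×m}, α : M → ℝᵐ, β : M → ℝ^{m×m} be smooth, and let A ∈ ℝ^{(n+q)×(n+q)}, B ∈ ℝ^{(n+q)×m} be matrices such that for all ξ ∈ M: DΦ(ξ)·(F(ξ) + G(ξ)α(ξ)) = A·Φ(ξ) and DΦ(ξ)·G(ξ)·β(ξ) = B. Let h > 0, let R_Φ be a discretization map on N, and suppose there exist matrices A_h ∈ ℝ^{(n+q)×(n+q)}, B_h ∈ ℝ^{(n+q)×m} such that for all z, z′ ∈ N and v ∈ ℝᵐ: [there exists y ∈ N with R_Φ(y, h(A·y + B·v)) = (z, z′)] if and only if z′ = A_h·z + B_h·v. Define the lifted discretization map R := (Φ⁻¹ × Φ⁻¹) ∘ R_Φ ∘ TΦ on M, where TΦ(ξ, ξ̇) := (Φ(ξ), DΦ(ξ)·ξ̇). Then R is a discretization map on M, and for all ξ_k, ξ_{k+1} ∈ M and v ∈ ℝᵐ, if there exists y ∈ M with R(y, h(F(y) + G(y)(α(y) + β(y)v))) = (ξ_k, ξ_{k+1}),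 then Φ(ξ_{k+1}) = A_h·Φ(ξ_k) + B_h·v; i.e., the induced discretization of the extended system ξ̇ = F(ξ) + G(ξ)μ under the static feedback μ = α(ξ) + β(ξ)v is transformed by z = Φ(ξ) into the linear discrete-time system z_{k+1} = A_h·z_k + B_h·v_k. -/

import Mathlib

/-!
The lifted map is the conjugate of `R` by the diffeomorphism `Φ`, and each axiom of a discretization
map is invariant under this conjugation. Since `R (y, 0) = (y, y)`, both components of the lift have
their fiber derivative at `0` conjugated by the same `DΦ` and `DΨ`, so the difference of the two is
`DΨ ∘ id ∘ DΦ = id`.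

The linearization equations say that `Φ` carries the closed-loop field `F + G (α + β v)` to the
field `z ↦ A z + B v`. Steps of a discretization are natural under such a change of coordinates, so
`Φ` matches the steps of the lifted scheme with those of the linear scheme.
-/

open Matrix

/-- A discretization map on an open set `U ⊆ ℝᵈ`. -/
def IsDiscretizationMap {d : ℕ} (U : Set (Fin d → ℝ))
    (O : Set ((Fin d → ℝ) × (Fin d → ℝ)))
    (Rd : ((Fin d → ℝ) × (Fin d → ℝ)) → ((Fin d → ℝ) × (Fin d → ℝ))) : Prop :=
  IsOpen O ∧ O ⊆ U ×ˢ (Set.univ : Set (Fin d → ℝ)) ∧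
  (∀ x ∈ U, ((x, (0 : Fin d → ℝ))) ∈ O) ∧
  ContDiffOn ℝ (⊤ : ℕ∞) Rd O ∧
  (∀ p ∈ O, (Rd p).1 ∈ U ∧ (Rd p).2 ∈ U) ∧
  (∀ x ∈ U, Rd (x, 0) = (x, x)) ∧
  (∀ x ∈ U,
    fderiv ℝ (fun v => (Rd (x, v)).2) 0 - fderiv ℝ (fun v => (Rd (x, v)).1) 0
      = ContinuousLinearMap.id ℝ (Fin d → ℝ))


open Set
open scoped ContDiff Topology

lemma leftInvOn_eq_iff {X Y : Type*} {φ : X → Y} {ψ : Y → X} {s : Set X} (hinv : LeftInvOn ψ φ s)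
    {x : X} {z : Y} (hx : x ∈ s) (hz : z ∈ φ '' s) : ψ z = x ↔ z = φ x := by
  obtain ⟨x', hx', rfl⟩ := hz
  rw [hinv hx', hinv.injOn.eq_iff hx' hx]

section Lift

variable {𝕜 E E' : Type*} [NontriviallyNormedField 𝕜] [NormedAddCommGroup E] [NormedSpace 𝕜 E]
  [NormedAddCommGroup E'] [NormedSpace 𝕜 E']

variable (𝕜) in
/-- The tangent map `TΦ (ξ, w) = (Φ ξ, DΦ(ξ) w)`, on pairs rather than on tangent bundles. -/
noncomputable def tangentLift (Φ : E → E') (p : E × E) : E' × E' :=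
  (Φ p.1, fderiv 𝕜 Φ p.1 p.2)

variable (𝕜) in
/-- The lift `(Ψ × Ψ) ∘ R ∘ TΦ` of a map `R` on the codomain of `Φ`, where `Ψ` plays `Φ⁻¹`. -/
noncomputable def liftedMap (Φ : E → E') (Ψ : E' → E) (R : E' × E' → E' × E') (p : E × E) : E × E :=
  Prod.map Ψ Ψ (R (tangentLift 𝕜 Φ p))

variable (𝕜) in
/-- The domain of `liftedMap 𝕜 Φ Ψ R` when `Φ` is considered on `M` and `R` on `O`. -/
def liftedDomain (M : Set E) (Φ : E → E') (O : Set (E' × E')) : Set (E × E) :=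
  {p | p.1 ∈ M ∧ tangentLift 𝕜 Φ p ∈ O}

/-- `IsInducedStep U O R h f x x'`: the scheme that the map `R`, with domain `O`, induces for the
field `f` on `U` with step size `h` can go from `x` to `x'`. The scheme is implicit: one solves
`R (y, h f(y)) = (x, x')` for the point `y` at which `f` is evaluated. -/
def IsInducedStep (U : Set E) (O : Set (E × E)) (R : E × E → E × E) (h : 𝕜) (f : E → E)
    (x x' : E) : Prop :=
  ∃ y ∈ U, (y, h • f y) ∈ O ∧ R (y, h • f y) = (x, x')

variable {Φ : E → E'} {Ψ : E' → E} {M : Set E} {N : Set E'} {O : Set (E' × E')}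
  {R : E' × E' → E' × E'} {k n : WithTop ℕ∞}

lemma contDiffOn_tangentLift (hM : IsOpen M) (hΦ : ContDiffOn 𝕜 n Φ M) (hkn : k + 1 ≤ n) :
    ContDiffOn 𝕜 k (tangentLift 𝕜 Φ) (Prod.fst ⁻¹' M) := by
  have hfst : ContDiffOn 𝕜 k (Prod.fst : E × E → E) (Prod.fst ⁻¹' M) := contDiffOn_fst
  have hΦ' : ContDiffOn 𝕜 k Φ M := hΦ.of_le (le_self_add.trans hkn)
  have hDΦ : ContDiffOn 𝕜 k (fderiv 𝕜 Φ) M := hΦ.fderiv_of_isOpen hM hkn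
  exact (hΦ'.comp hfst (mapsTo_preimage _ _)).prodMk
    ((hDΦ.comp hfst (mapsTo_preimage _ _)).clm_apply contDiffOn_snd)

lemma isOpen_liftedDomain (hM : IsOpen M) (hO : IsOpen O) (hΦ : ContDiffOn 𝕜 1 Φ M) :
    IsOpen (liftedDomain 𝕜 M Φ O) :=
  (contDiffOn_tangentLift (k := 0) hM hΦ (by simp)).continuousOn.isOpen_inter_preimage
    (hM.preimage continuous_fst) hO

lemma contDiffOn_liftedMap (hM : IsOpen M) (hΦ : ContDiffOn 𝕜 n Φ M) (hkn : k + 1 ≤ n)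
    (hΨ : ContDiffOn 𝕜 k Ψ N) (hR : ContDiffOn 𝕜 k R O) (hmaps : MapsTo R O (N ×ˢ N)) :
    ContDiffOn 𝕜 k (liftedMap 𝕜 Φ Ψ R) (liftedDomain 𝕜 M Φ O) := by
  have hT : ContDiffOn 𝕜 k (tangentLift 𝕜 Φ) (liftedDomain 𝕜 M Φ O) :=
    (contDiffOn_tangentLift hM hΦ hkn).mono fun _ hp => hp.1
  have hRT : ContDiffOn 𝕜 k (R ∘ tangentLift 𝕜 Φ) (liftedDomain 𝕜 M Φ O) :=
    hR.comp hT fun _ hp => hp.2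
  exact (hΨ.prodMap hΨ).comp hRT fun _ hp => hmaps hp.2

lemma tangentLift_zero (Φ : E → E') (x : E) : tangentLift 𝕜 Φ (x, 0) = (Φ x, 0) := by
  simp [tangentLift]

lemma fderiv_comp_fderiv_of_leftInvOn {x : E} (hM : M ∈ 𝓝 x) (hinv : LeftInvOn Ψ Φ M)
    (hΨ : DifferentiableAt 𝕜 Ψ (Φ x)) (hΦ : DifferentiableAt 𝕜 Φ x) :
    fderiv 𝕜 Ψ (Φ x) ∘L fderiv 𝕜 Φ x = ContinuousLinearMap.id 𝕜 E := by
  rw [← fderiv_comp x hΨ hΦ, ← fderiv_id (𝕜 := 𝕜) (x := x)]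
  exact (Filter.eventuallyEq_of_mem hM hinv).fderiv_eq

lemma fderiv_comp_comp_clm {F G : Type*} [NormedAddCommGroup F] [NormedSpace 𝕜 F]
    [NormedAddCommGroup G] [NormedSpace 𝕜 G] {g : F → G} {f : E' → F} (L : E →L[𝕜] E') {x : E}
    (hg : DifferentiableAt 𝕜 g (f (L x))) (hf : DifferentiableAt 𝕜 f (L x)) :
    fderiv 𝕜 (fun v => g (f (L v))) x = fderiv 𝕜 g (f (L x)) ∘L fderiv 𝕜 f (L x) ∘L L :=
  (hg.hasFDerivAt.comp x (hf.hasFDerivAt.comp x L.hasFDerivAt)).fderiv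

lemma fderiv_liftedMap_snd_sub_fst {x : E} (hΨ : DifferentiableAt 𝕜 Ψ (Φ x))
    (hR : DifferentiableAt 𝕜 R (Φ x, 0)) (hR0 : R (Φ x, 0) = (Φ x, Φ x)) :
    fderiv 𝕜 (fun v => (liftedMap 𝕜 Φ Ψ R (x, v)).2) 0
        - fderiv 𝕜 (fun v => (liftedMap 𝕜 Φ Ψ R (x, v)).1) 0
      = fderiv 𝕜 Ψ (Φ x) ∘L
          (fderiv 𝕜 (fun w => (R (Φ x, w)).2) 0 - fderiv 𝕜 (fun w => (R (Φ x, w)).1) 0) ∘L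
          fderiv 𝕜 Φ x := by
  have hslice : DifferentiableAt 𝕜 (fun w => R (Φ x, w)) (fderiv 𝕜 Φ x 0) := by
    rw [← map_zero (fderiv 𝕜 Φ x)] at hR
    exact hR.comp _ (by fun_prop)
  have hfst := fderiv_comp_comp_clm (g := Ψ) (fderiv 𝕜 Φ x) (by simpa [hR0]) hslice.fst
  have hsnd := fderiv_comp_comp_clm (g := Ψ) (fderiv 𝕜 Φ x) (by simpa [hR0]) hslice.snd
  simp only [map_zero, hR0] at hfst hsnd
  simp only [liftedMap, tangentLift, Prod.map_fst, Prod.map_snd, hfst, hsnd,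
    ContinuousLinearMap.comp_sub, ContinuousLinearMap.sub_comp]

theorem isInducedStep_liftedMap_iff (hinv : LeftInvOn Ψ Φ M)
    (hmaps : MapsTo R O ((Φ '' M) ×ˢ (Φ '' M))) {f : E → E} {g : E' → E'}
    (hfg : ∀ y ∈ M, fderiv 𝕜 Φ y (f y) = g (Φ y)) (h : 𝕜) {ξ ξ' : E} (hξ : ξ ∈ M) (hξ' : ξ' ∈ M) :
    IsInducedStep M (liftedDomain 𝕜 M Φ O) (liftedMap 𝕜 Φ Ψ R) h f ξ ξ' ↔
      IsInducedStep (Φ '' M) O R h g (Φ ξ) (Φ ξ') := by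
  have htangent : ∀ y ∈ M, tangentLift 𝕜 Φ (y, h • f y) = (Φ y, h • g (Φ y)) := fun y hy => by
    rw [tangentLift, map_smul, hfg y hy]
  have hlift : ∀ p ∈ O, Prod.map Ψ Ψ (R p) = (ξ, ξ') ↔ R p = (Φ ξ, Φ ξ') := fun p hp => by
    rw [Prod.ext_iff, Prod.ext_iff]
    exact and_congr (leftInvOn_eq_iff hinv hξ (hmaps hp).1)
      (leftInvOn_eq_iff hinv hξ' (hmaps hp).2)
  rw [IsInducedStep, IsInducedStep, exists_mem_image]
  refine exists_congr fun y => and_congr_right fun hy => ?_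
  simp only [liftedDomain, liftedMap, mem_ofPred_eq, htangent y hy, hy, true_and]
  exact and_congr_right (hlift _)

end Lift

namespace IsDiscretizationMap

variable {d : ℕ} {U : Set (Fin d → ℝ)} {O : Set ((Fin d → ℝ) × (Fin d → ℝ))}
  {R : (Fin d → ℝ) × (Fin d → ℝ) → (Fin d → ℝ) × (Fin d → ℝ)}

lemma mapsTo (hR : IsDiscretizationMap U O R) : MapsTo R O (U ×ˢ U) :=
  hR.2.2.2.2.1

theorem lift {M : Set (Fin d → ℝ)} {Φ Ψ : (Fin d → ℝ) → (Fin d → ℝ)}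
    (hM : IsOpen M) (hN : IsOpen (Φ '' M)) (hΦ : ContDiffOn ℝ ∞ Φ M)
    (hΨ : ContDiffOn ℝ ∞ Ψ (Φ '' M)) (hinv : LeftInvOn Ψ Φ M)
    (hR : IsDiscretizationMap (Φ '' M) O R) :
    IsDiscretizationMap M (liftedDomain ℝ M Φ O) (liftedMap ℝ Φ Ψ R) := by
  obtain ⟨hO, -, hzero, hsmooth, hmaps, hdiag, hderiv⟩ := hR
  have hΨM : MapsTo Ψ (Φ '' M) M := hinv.mapsTo (surjOn_image Φ M)
  refine ⟨isOpen_liftedDomain hM hO (hΦ.of_le (by simp)), fun p hp => ⟨hp.1, mem_univ _⟩,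
    fun x hx => ⟨hx, ?zero_mem⟩, contDiffOn_liftedMap hM hΦ (by simp) hΨ hsmooth hmaps,
    fun p hp => (hmaps _ hp.2).imp (@hΨM _) (@hΨM _), fun x hx => ?diagonal,
    fun x hx => ?derivative⟩
  all_goals have hΦx : Φ x ∈ Φ '' M := mem_image_of_mem Φ hx
  case zero_mem => simpa only [tangentLift_zero] using hzero _ hΦx
  case diagonal =>
    simp only [liftedMap, tangentLift_zero, hdiag _ hΦx, Prod.map_apply, hinv hx]
  case derivative =>
    have hΦd : DifferentiableAt ℝ Φ x :=
      (hΦ.contDiffAt (hM.mem_nhds hx)).differentiableAt (by simp)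
    have hΨd : DifferentiableAt ℝ Ψ (Φ x) :=
      (hΨ.contDiffAt (hN.mem_nhds hΦx)).differentiableAt (by simp)
    have hRd : DifferentiableAt ℝ R (Φ x, 0) :=
      (hsmooth.contDiffAt (hO.mem_nhds (hzero _ hΦx))).differentiableAt (by simp)
    rw [fderiv_liftedMap_snd_sub_fst hΨd hRd (hdiag _ hΦx), hderiv _ hΦx,
      ContinuousLinearMap.id_comp, fderiv_comp_fderiv_of_leftInvOn (hM.mem_nhds hx) hinv hΨd hΦd]

end IsDiscretizationMap

theorem lifted_discretization_is_feedback_linearizable_general {d m : ℕ} {M : Set (Fin d → ℝ)}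
    {Φ Ψ : (Fin d → ℝ) → (Fin d → ℝ)} (hM : IsOpen M) (hN : IsOpen (Φ '' M))
    (hΦ : ContDiffOn ℝ ∞ Φ M) (hΨ : ContDiffOn ℝ ∞ Ψ (Φ '' M)) (hinv : LeftInvOn Ψ Φ M)
    {F : (Fin d → ℝ) → (Fin d → ℝ)} {G : (Fin d → ℝ) → Matrix (Fin d) (Fin m) ℝ}
    {α : (Fin d → ℝ) → (Fin m → ℝ)} {β : (Fin d → ℝ) → Matrix (Fin m) (Fin m) ℝ}
    {A : Matrix (Fin d) (Fin d) ℝ} {B : Matrix (Fin d) (Fin m) ℝ}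
    (hA : ∀ ξ ∈ M, fderiv ℝ Φ ξ (F ξ + G ξ *ᵥ α ξ) = A *ᵥ Φ ξ)
    (hB : ∀ ξ ∈ M, ∀ v, fderiv ℝ Φ ξ (G ξ *ᵥ (β ξ *ᵥ v)) = B *ᵥ v)
    {h : ℝ} {O : Set ((Fin d → ℝ) × (Fin d → ℝ))}
    {R : (Fin d → ℝ) × (Fin d → ℝ) → (Fin d → ℝ) × (Fin d → ℝ)}
    (hR : IsDiscretizationMap (Φ '' M) O R)
    {Ah : Matrix (Fin d) (Fin d) ℝ} {Bh : Matrix (Fin d) (Fin m) ℝ}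
    (hscheme : ∀ z ∈ Φ '' M, ∀ z' ∈ Φ '' M, ∀ v,
      IsInducedStep (Φ '' M) O R h (fun y => A *ᵥ y + B *ᵥ v) z z' ↔ z' = Ah *ᵥ z + Bh *ᵥ v) :
    IsDiscretizationMap M (liftedDomain ℝ M Φ O) (liftedMap ℝ Φ Ψ R) ∧
      ∀ ξ ∈ M, ∀ ξ' ∈ M, ∀ v,
        IsInducedStep M (liftedDomain ℝ M Φ O) (liftedMap ℝ Φ Ψ R) h
            (fun y => F y + G y *ᵥ (α y + β y *ᵥ v)) ξ ξ' ↔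
          Φ ξ' = Ah *ᵥ Φ ξ + Bh *ᵥ v := by
  refine ⟨hR.lift hM hN hΦ hΨ hinv, fun ξ hξ ξ' hξ' v => ?_⟩
  have hrelated : ∀ y ∈ M,
      fderiv ℝ Φ y (F y + G y *ᵥ (α y + β y *ᵥ v)) = A *ᵥ Φ y + B *ᵥ v := fun y hy => by
    rw [mulVec_add, ← add_assoc, map_add, hA y hy, hB y hy]
  exact (isInducedStep_liftedMap_iff hinv hR.mapsTo (g := fun z => A *ᵥ z + B *ᵥ v)
    hrelated h hξ hξ').trans
    (hscheme _ (mem_image_of_mem Φ hξ) _ (mem_image_of_mem Φ hξ') v)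

/-- Main theorem: let `Φ : M → N` be a diffeomorphism linearizing the extended system
`ξ̇ = F(ξ) + G(ξ)μ` via the static feedback `μ = α(ξ) + β(ξ)v`, i.e.
`DΦ(ξ)·(F(ξ)+G(ξ)α(ξ)) = A·Φ(ξ)` and `DΦ(ξ)·G(ξ)·β(ξ) = B`.  Suppose the discretization map
`R_Φ` on `N` discretizes the linear system `ż = Az + Bv` into `z' = A_h z + B_h v`.  Then the
lifted map `R := (Φ⁻¹ × Φ⁻¹) ∘ R_Φ ∘ TΦ` is a discretization map on `M`, and the induced
discretization of the extended system, under the same feedback `μ = α(ξ) + β(ξ)v`, is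
transformed by `z = Φ(ξ)` into the linear discrete-time system `z_{k+1} = A_h z_k + B_h v_k`. -/
theorem lifted_discretization_is_feedback_linearizable {n q m : ℕ}
    (M N : Set (Fin (n + q) → ℝ)) (hM : IsOpen M) (hN : IsOpen N)
    (Φ Ψ : (Fin (n + q) → ℝ) → (Fin (n + q) → ℝ))
    (hΦsmooth : ContDiffOn ℝ (⊤ : ℕ∞) Φ M)
    (hΨsmooth : ContDiffOn ℝ (⊤ : ℕ∞) Ψ N)
    (hΦmaps : Φ '' M = N)
    (hΨΦ : ∀ ξ ∈ M, Ψ (Φ ξ) = ξ)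
    (hΦΨ : ∀ z ∈ N, Φ (Ψ z) = z)
    -- the extended dynamics and the linearizing static feedback
    (F : (Fin (n + q) → ℝ) → (Fin (n + q) → ℝ))
    (G : (Fin (n + q) → ℝ) → Matrix (Fin (n + q)) (Fin m) ℝ)
    (α : (Fin (n + q) → ℝ) → (Fin m → ℝ))
    (β : (Fin (n + q) → ℝ) → Matrix (Fin m) (Fin m) ℝ)
    (hFsmooth : ContDiffOn ℝ (⊤ : ℕ∞) F M)
    (hGsmooth : ∀ i j, ContDiffOn ℝ (⊤ : ℕ∞) (fun ξ => G ξ i j) M)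
    (hαsmooth : ContDiffOn ℝ (⊤ : ℕ∞) α M)
    (hβsmooth : ∀ i j, ContDiffOn ℝ (⊤ : ℕ∞) (fun ξ => β ξ i j) M)
    (A : Matrix (Fin (n + q)) (Fin (n + q)) ℝ) (B : Matrix (Fin (n + q)) (Fin m) ℝ)
    (hlinA : ∀ ξ ∈ M, fderiv ℝ Φ ξ (F ξ + G ξ *ᵥ α ξ) = A *ᵥ Φ ξ)
    (hlinB : ∀ ξ ∈ M, ∀ v : Fin m → ℝ, fderiv ℝ Φ ξ (G ξ *ᵥ (β ξ *ᵥ v)) = B *ᵥ v)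
    -- a discretization map on `N` that discretizes `ż = Az + Bv` into `z' = A_h z + B_h v`
    (h : ℝ) (hh : 0 < h)
    (OΦ : Set ((Fin (n + q) → ℝ) × (Fin (n + q) → ℝ)))
    (RΦ : ((Fin (n + q) → ℝ) × (Fin (n + q) → ℝ)) → ((Fin (n + q) → ℝ) × (Fin (n + q) → ℝ)))
    (hRΦ : IsDiscretizationMap N OΦ RΦ)
    (Ah : Matrix (Fin (n + q)) (Fin (n + q)) ℝ) (Bh : Matrix (Fin (n + q)) (Fin m) ℝ)
    (hlinscheme : ∀ z ∈ N, ∀ z' ∈ N, ∀ v : Fin m → ℝ,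
      (∃ y ∈ N, (y, h • (A *ᵥ y + B *ᵥ v)) ∈ OΦ ∧
          RΦ (y, h • (A *ᵥ y + B *ᵥ v)) = (z, z')) ↔ z' = Ah *ᵥ z + Bh *ᵥ v) :
    -- the lifted map `R = (Φ⁻¹ × Φ⁻¹) ∘ R_Φ ∘ TΦ` is a discretization map on `M` ...
    IsDiscretizationMap M
      {p : (Fin (n + q) → ℝ) × (Fin (n + q) → ℝ) |
        p.1 ∈ M ∧ (Φ p.1, fderiv ℝ Φ p.1 p.2) ∈ OΦ}
      (fun p => (Ψ (RΦ (Φ p.1, fderiv ℝ Φ p.1 p.2)).1, Ψ (RΦ (Φ p.1, fderiv ℝ Φ p.1 p.2)).2))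
    ∧
    -- ... and the induced discretization of the extended system under the feedback
    -- `μ = α + βv` is mapped by `Φ` onto `z_{k+1} = A_h z_k + B_h v_k`.
    (∀ ξk ∈ M, ∀ ξk1 ∈ M, ∀ v : Fin m → ℝ,
      (∃ y ∈ M, (Φ y, fderiv ℝ Φ y (h • (F y + G y *ᵥ (α y + β y *ᵥ v)))) ∈ OΦ ∧
        (Ψ (RΦ (Φ y, fderiv ℝ Φ y (h • (F y + G y *ᵥ (α y + β y *ᵥ v))))).1,
         Ψ (RΦ (Φ y, fderiv ℝ Φ y (h • (F y + G y *ᵥ (α y + β y *ᵥ v))))).2) = (ξk, ξk1)) →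
      Φ ξk1 = Ah *ᵥ Φ ξk + Bh *ᵥ v) := by
  subst hΦmaps
  have ⟨hlift, hstep⟩ := lifted_discretization_is_feedback_linearizable_general hM hN hΦsmooth
    hΨsmooth hΨΦ hlinA hlinB hRΦ hlinscheme
  exact ⟨hlift, fun ξ hξ ξ' hξ' v ⟨y, hy, hyO, hRy⟩ =>
    (hstep ξ hξ ξ' hξ' v).1 ⟨y, hy, ⟨hy, hyO⟩, hRy⟩⟩
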